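/- (Fiacco) Suppose x* is a KKT stationary solution of NLP(p) at which GSSOSC and MFCQ hold, and let x(q) be the locally unique continuous local solution map with x(p) = x* (given by Kojima's theorem) and φ_ℓ(q) = f(x(q), q) the corresponding local value function. Then φ_ℓ has a finite one-sided directional derivative at p in every direction h ∈ ℝ^ℓ, and φ_ℓ'(p; h) = max_{(y,z) ∈ M_p(x*)} ∇_p L(x*, y, z, p)ᵀ h. -/

import Mathlib

/-!
The value function is compared with the Lagrangian along the path `X t = x(p + t h)`, one
ultrafilter `u ≤ 𝓝[>] 0` at a time, so that every bounded quantity converges.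

By `exists_convergent_multipliers`, the points `X t` have KKT multipliers `(Y t, Z t)` tending to
some `(y, z) ∈ M_p(x*)`. Weak duality gives two inequalities for `φ(t) - φ(0)`:

* it is at most `L(X t, Y t, Z t, p + t h) - L(x*, Y t, Z t, p)`;
* for each fixed `(y', z') ∈ M_p(x*)` it is at least
  `L(X t, y', z', p + t h) - L(x*, y', z', p)`.

The `p`-increment of the Lagrangian at `x*` contributes `t ∇_p L h + o(t)` in both cases. The
`x`-increment has the required sign up to `o(t)`: its first-order term is zero in the first case
and `O(t ‖X t - x*‖)` in the second, so the second-order term decides (`curvature_bound`). If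
`‖X t - x*‖² = o(t)` that term is negligible. Otherwise `t = o(‖X t - x*‖)`, the limit direction of
`X t - x*` lies in `D_p(x*; z')` for every multiplier (`mem_Dset_of_slow`), and GSSOSC makes the
term positive.

Hence the limit superior of the difference quotient is at most the value of the linear functional
`∇_p L h` at `(y, z)`, and the limit inferior is at least its value at every multiplier. So `(y, z)`
maximises the functional over `M_p(x*)` and the maximum is the limit.
-/

open Filter Topology Set Matrix

attribute [local instance] Classical.propDecidable

namespace SensNLP

variable {n l me mi : ℕ}
variable (f : (Fin n → ℝ) → (Fin l → ℝ) → ℝ)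
  (g : (Fin n → ℝ) → (Fin l → ℝ) → Fin me → ℝ)
  (h : (Fin n → ℝ) → (Fin l → ℝ) → Fin mi → ℝ)
  (p : Fin l → ℝ) (x : Fin n → ℝ) (y : Fin me → ℝ) (z : Fin mi → ℝ)
  (hdir : Fin l → ℝ)

/-- The Lagrangian `L(x,y,z,p) = f(x,p) + yᵀ g(x,p) + zᵀ h(x,p)`. -/
noncomputable def Lag : ℝ :=
  f x p + ∑ i, y i * g x p i + ∑ j, z j * h x p j

/-- The gradient (with respect to `x`) of a scalar function, as a vector. -/
noncomputable def gradx (φ : (Fin n → ℝ) → ℝ) (x : Fin n → ℝ) : Fin n → ℝ :=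
  fun j => fderiv ℝ φ x (Pi.single j 1)

/-- The quadratic form `dᵀ ∇²φ(x) d` of the Hessian of a scalar function. -/
noncomputable def hessQ (φ : (Fin n → ℝ) → ℝ) (x d : Fin n → ℝ) : ℝ :=
  fderiv ℝ (fun x' => fderiv ℝ φ x' d) x d

/-- KKT conditions: stationarity of the Lagrangian in `x`, primal feasibility,
dual feasibility and complementarity. -/
def IsKKT : Prop :=
  fderiv ℝ (fun x' => Lag f g h p x' y z) x = 0 ∧
  g x p = 0 ∧ h x p ≤ 0 ∧ 0 ≤ z ∧ ∑ j, z j * h x p j = 0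

/-- The multiplier set `M_p(x)`. -/
def MultSet : Set ((Fin me → ℝ) × (Fin mi → ℝ)) :=
  {yz | IsKKT f g h p x yz.1 yz.2}

/-- LICQ: linear independence of the gradients of equality and active inequality
constraints. -/
def LICQ : Prop :=
  LinearIndependent ℝ
    (fun i : Fin me ⊕ {j : Fin mi // h x p j = 0} =>
      Sum.elim (fun i => gradx (fun x' => g x' p i) x)
        (fun j => gradx (fun x' => h x' p j.1) x) i)

/-- MFCQ. -/
def MFCQ : Prop :=
  LinearIndependent ℝ (fun i : Fin me => gradx (fun x' => g x' p i) x) ∧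
  ∃ d : Fin n → ℝ,
    (∀ i, fderiv ℝ (fun x' => g x' p i) x d = 0) ∧
    (∀ j, h x p j = 0 → fderiv ℝ (fun x' => h x' p j) x d < 0)

/-- SMFCQ (relative to a multiplier `z`). -/
def SMFCQ : Prop :=
  LinearIndependent ℝ
    (fun i : Fin me ⊕ {j : Fin mi // h x p j = 0 ∧ 0 < z j} =>
      Sum.elim (fun i => gradx (fun x' => g x' p i) x)
        (fun j => gradx (fun x' => h x' p j.1) x) i) ∧
  ∃ d : Fin n → ℝ,
    (∀ i, fderiv ℝ (fun x' => g x' p i) x d = 0) ∧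
    (∀ j, h x p j = 0 → 0 < z j → fderiv ℝ (fun x' => h x' p j) x d = 0) ∧
    (∀ j, h x p j = 0 → z j = 0 → fderiv ℝ (fun x' => h x' p j) x d < 0)

/-- CRCQ at `x` (for parameter `p`): every subfamily of gradients of equality
constraints and active inequality constraints has constant rank near `x`. -/
def CRCQ : Prop :=
  ∃ W ∈ 𝓝 x, ∀ (J : Finset (Fin me)) (I : Finset (Fin mi)),
    (∀ i ∈ I, h x p i = 0) →
    ∃ r : ℕ, ∀ x' ∈ W,
      Module.finrank ℝ ↥(Submodule.span ℝ
        ((fun i => gradx (fun x'' => g x'' p i) x') '' ↑J ∪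
         (fun i => gradx (fun x'' => h x'' p i) x') '' ↑I)) = r

/-- The critical cone `C_p(x)`. -/
def criticalCone : Set (Fin n → ℝ) :=
  {d | fderiv ℝ (fun x' => f x' p) x d ≤ 0 ∧
       (∀ i, fderiv ℝ (fun x' => g x' p i) x d = 0) ∧
       (∀ j, h x p j = 0 → fderiv ℝ (fun x' => h x' p j) x d ≤ 0)}

/-- The set `D_p(x;z)` used in the strong second-order sufficiency condition. -/
def Dset : Set (Fin n → ℝ) :=
  {d | (∀ i, fderiv ℝ (fun x' => g x' p i) x d = 0) ∧
       (∀ j, h x p j = 0 → 0 < z j → fderiv ℝ (fun x' => h x' p j) x d = 0)}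

/-- SOSC. -/
def SOSC : Prop :=
  ∃ yz ∈ MultSet f g h p x, ∀ d ∈ criticalCone f g h p x, d ≠ 0 →
    0 < hessQ (fun x' => Lag f g h p x' yz.1 yz.2) x d

/-- SSOSC. -/
def SSOSC : Prop :=
  ∃ yz ∈ MultSet f g h p x, ∀ d ∈ Dset g h p x yz.2, d ≠ 0 →
    0 < hessQ (fun x' => Lag f g h p x' yz.1 yz.2) x d

/-- GSSOSC. -/
def GSSOSC : Prop :=
  ∀ yz ∈ MultSet f g h p x, ∀ d ∈ Dset g h p x yz.2, d ≠ 0 →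
    0 < hessQ (fun x' => Lag f g h p x' yz.1 yz.2) x d

/-- Strict complementarity slackness: no weakly active constraint. -/
def SCS : Prop :=
  ∀ j, h x p j = 0 → z j ≠ 0

/-- `x` is a local solution (local minimizer) of NLP(p). -/
def IsLocalSol : Prop :=
  g x p = 0 ∧ h x p ≤ 0 ∧
  ∃ W ∈ 𝓝 x, ∀ x' ∈ W, g x' p = 0 → h x' p ≤ 0 → f x p ≤ f x' p

/-- The directional critical set `K_p(x,z;h)`. -/
def Kset : Set (Fin n → ℝ) :=
  {d | (∀ i, fderiv ℝ (fun x' => g x' p i) x d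
          + fderiv ℝ (fun p' => g x p' i) p hdir = 0) ∧
       (∀ j, h x p j = 0 → 0 < z j →
          fderiv ℝ (fun x' => h x' p j) x d
          + fderiv ℝ (fun p' => h x p' j) p hdir = 0) ∧
       (∀ j, h x p j = 0 → z j = 0 →
          fderiv ℝ (fun x' => h x' p j) x d
          + fderiv ℝ (fun p' => h x p' j) p hdir ≤ 0)}

/-- The objective of the sensitivity QP:
`½ dᵀ ∇²ₓₓL d + hᵀ ∇²ₚₓL d`. -/
noncomputable def QPobj (d : Fin n → ℝ) : ℝ :=
  (1 / 2) * hessQ (fun x' => Lag f g h p x' y z) x d +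
    fderiv ℝ (fun p' => fderiv ℝ (fun x'' => Lag f g h p' x'' y z) x d) p hdir

/-- The set `S_p(x;h)` of multipliers maximizing the linear functional
`(y,z) ↦ yᵀ (J_p g) h + zᵀ (J_p h) h` over `M_p(x)`. -/
def Sset : Set ((Fin me → ℝ) × (Fin mi → ℝ)) :=
  {yz ∈ MultSet f g h p x | ∀ yz' ∈ MultSet f g h p x,
    (∑ i, yz'.1 i * fderiv ℝ (fun p' => g x p' i) p hdir) +
      (∑ j, yz'.2 j * fderiv ℝ (fun p' => h x p' j) p hdir) ≤
    (∑ i, yz.1 i * fderiv ℝ (fun p' => g x p' i) p hdir) +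
      (∑ j, yz.2 j * fderiv ℝ (fun p' => h x p' j) p hdir)}

/-- A `PC¹` (piecewise continuously differentiable) function at a point. -/
def PC1At {N' : ℕ} (F : (Fin l → ℝ) → (Fin N' → ℝ)) (p : Fin l → ℝ) : Prop :=
  ∃ N ∈ 𝓝 p, ∃ k : ℕ, ∃ Fs : Fin k → (Fin l → ℝ) → (Fin N' → ℝ),
    ContinuousOn F N ∧ (∀ i, ContDiffOn ℝ 1 (Fs i) N) ∧
    ∀ q ∈ N, ∃ i, F q = Fs i q

/-- A piecewise linear (continuous selection of finitely many linear maps) function. -/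
def IsPiecewiseLinear {N' : ℕ} (D : (Fin l → ℝ) → (Fin N' → ℝ)) : Prop :=
  Continuous D ∧ ∃ k : ℕ, ∃ T : Fin k → (Fin l → ℝ) →ₗ[ℝ] (Fin N' → ℝ),
    ∀ v, ∃ i, D v = T i v


/-! ### Limits along ultrafilters and Fritz John conditions -/

/-- Along an ultrafilter every function with values in a compact set converges; this replaces
all passages to convergent subsequences. -/
theorem exists_ultra_lim {α X : Type*} [TopologicalSpace X] (u : Ultrafilter α) {K : Set X}
    (hK : IsCompact K) {x : α → X} (hx : ∀ᶠ t in (u : Filter α), x t ∈ K) :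
    ∃ a ∈ K, Tendsto x (u : Filter α) (𝓝 a) :=
  hK.ultrafilter_le_nhds (u.map x) (le_principal_iff.2 hx)

theorem hasDerivAt_sq_max (s : ℝ) :
    HasDerivAt (fun s : ℝ => (max s 0) ^ 2) (2 * max s 0) s := by
  rw [hasDerivAt_iff_isLittleO]
  have h1 : (fun s' : ℝ => (max s' 0) ^ 2 - (max s 0) ^ 2 - (s' - s) • (2 * max s 0))
      =O[𝓝 s] fun s' => (s' - s) ^ 2 := by
    refine Asymptotics.IsBigO.of_bound 1 (Eventually.of_forall fun s' => ?_)
    rw [Real.norm_eq_abs, Real.norm_eq_abs, abs_of_nonneg (sq_nonneg (s' - s)), smul_eq_mul,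
      abs_le]
    rcases le_total s' 0 with a | a <;> rcases le_total s 0 with b | b <;>
      simp only [max_eq_right, max_eq_left, a, b] <;> constructor <;> nlinarith
  refine h1.trans_isLittleO ?_
  have h2 : (fun s' : ℝ => s' - s) =o[𝓝 s] fun _ => (1 : ℝ) := by
    rw [Asymptotics.isLittleO_one_iff]
    have : Tendsto (fun s' : ℝ => s' - s) (𝓝 s) (𝓝 (s - s)) :=
      (continuous_id.sub continuous_const).tendsto s
    simpa using this
  have h3 := (Asymptotics.isBigO_refl (fun s' : ℝ => s' - s) (𝓝 s)).mul_isLittleO h2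
  simpa [sq] using h3

/-- Fritz John necessary conditions, with the multiplier triple `c = (c₀, y, z)` normalised to
have norm one. The triple is a limit of normalised penalty multipliers: one minimises
`f₀ + ‖· - x₀‖² + k (∑ gᵢ² + ∑ max(hⱼ, 0)²)` over a small closed ball and lets `k → ∞`. The
quadratic term, written in coordinates so as to be smooth, forces the minimisers to tend
to `x₀`. -/
theorem fritz_john {f0 : (Fin n → ℝ) → ℝ} {g0 : Fin me → (Fin n → ℝ) → ℝ}
    {h0 : Fin mi → (Fin n → ℝ) → ℝ} (hf : ContDiff ℝ 1 f0) (hg : ∀ i, ContDiff ℝ 1 (g0 i))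
    (hh : ∀ j, ContDiff ℝ 1 (h0 j)) {x0 : Fin n → ℝ} (hg0 : ∀ i, g0 i x0 = 0)
    (hh0 : ∀ j, h0 j x0 ≤ 0) {W : Set (Fin n → ℝ)} (hW : W ∈ 𝓝 x0)
    (hmin : ∀ x ∈ W, (∀ i, g0 i x = 0) → (∀ j, h0 j x ≤ 0) → f0 x0 ≤ f0 x) :
    ∃ c : ℝ × (Fin me → ℝ) × (Fin mi → ℝ), ‖c‖ = 1 ∧ 0 ≤ c.1 ∧ (∀ j, 0 ≤ c.2.2 j) ∧
      (∀ j, c.2.2 j * h0 j x0 = 0) ∧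
      c.1 • fderiv ℝ f0 x0 + ∑ i, c.2.1 i • fderiv ℝ (g0 i) x0
        + ∑ j, c.2.2 j • fderiv ℝ (h0 j) x0 = 0 := by
  obtain ⟨r, hr, hrW⟩ := Metric.nhds_basis_closedBall.mem_iff.1 hW
  set K := Metric.closedBall x0 r with hK
  have hKc : IsCompact K := isCompact_closedBall x0 r
  have hx0K : x0 ∈ K := Metric.mem_closedBall_self hr.le
  let S : ℕ → (Fin n → ℝ) → ℝ := fun k x => f0 x + ∑ i, (x i - x0 i) ^ 2
    + ∑ i, (k : ℝ) * (g0 i x) ^ 2 + ∑ j, (k : ℝ) * (max (h0 j x) 0) ^ 2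
  have cf := hf.continuous
  have cg := fun i => (hg i).continuous
  have ch := fun j => (hh j).continuous
  have hSc : ∀ k, Continuous (S k) := fun k => by
    simp only [S]; fun_prop
  choose X hXK hX using fun k => hKc.exists_isMinOn ⟨x0, hx0K⟩ (hSc k).continuousOn
  have hXle : ∀ k, S k (X k) ≤ f0 x0 := fun k => by
    have := hX k hx0K
    simp only [mem_ofPred_eq] at this
    refine this.trans_eq ?_
    simp [S, hg0, hh0]
  let u : Ultrafilter ℕ := hyperfilter ℕ
  have hu : (u : Filter ℕ) ≤ atTop := Nat.hyperfilter_le_atTop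
  obtain ⟨x1, hx1K, hx1⟩ := exists_ultra_lim u hKc (Eventually.of_forall hXK)
  -- the penalty term of the minimisers is `O(1/k)`, so the limit point is feasible
  let P : (Fin n → ℝ) → ℝ := fun x => ∑ i, (g0 i x) ^ 2 + ∑ j, (max (h0 j x) 0) ^ 2
  have hPc : Continuous P := by simp only [P]; fun_prop
  have hP0 : ∀ x, 0 ≤ P x := fun x => by simp only [P]; positivity
  have hSP : ∀ k x, S k x = f0 x + ∑ i, (x i - x0 i) ^ 2 + k * P x := fun k x => by
    simp only [S, P, mul_add, Finset.mul_sum]; ring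
  obtain ⟨xm, -, hxm⟩ := hKc.exists_isMinOn ⟨x0, hx0K⟩ cf.continuousOn
  have hPle : ∀ k : ℕ, (k : ℝ) * P (X k) ≤ f0 x0 - f0 xm := fun k => by
    have h1 := hXle k
    rw [hSP] at h1
    have h2 : f0 xm ≤ f0 (X k) := hxm (hXK k)
    have h3 : 0 ≤ ∑ i, (X k i - x0 i) ^ 2 := by positivity
    linarith
  have hP1 : P x1 = 0 := by
    refine le_antisymm ?_ (hP0 _)
    have t1 : Tendsto (fun k => P (X k)) u (𝓝 (P x1)) := (hPc.tendsto x1).comp hx1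
    have t2 : Tendsto (fun k : ℕ => (f0 x0 - f0 xm) / (k : ℝ)) u (𝓝 0) :=
      (tendsto_const_div_atTop_nhds_zero_nat _).mono_left hu
    refine le_of_tendsto_of_tendsto t1 t2 ?_
    filter_upwards [hu (eventually_gt_atTop 0)] with k hk
    rw [le_div_iff₀ (by exact_mod_cast hk), mul_comm]
    exact hPle k
  have hfeas : (∀ i, g0 i x1 = 0) ∧ ∀ j, h0 j x1 ≤ 0 := by
    have hA : 0 ≤ ∑ i, (g0 i x1) ^ 2 := by positivity
    have hB : 0 ≤ ∑ j, (max (h0 j x1) 0) ^ 2 := by positivity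
    have hAB : ∑ i, (g0 i x1) ^ 2 + ∑ j, (max (h0 j x1) 0) ^ 2 = 0 := hP1
    constructor
    · intro i
      have := (Finset.sum_eq_zero_iff_of_nonneg (fun i _ => sq_nonneg (g0 i x1))).1
        (by linarith) i (Finset.mem_univ i)
      exact pow_eq_zero_iff two_ne_zero |>.1 this
    · intro j
      have := (Finset.sum_eq_zero_iff_of_nonneg (fun j _ => sq_nonneg (max (h0 j x1) 0))).1
        (by linarith) j (Finset.mem_univ j)
      have := pow_eq_zero_iff two_ne_zero |>.1 this
      exact max_eq_right_iff.1 this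
  have hx10 : x1 = x0 := by
    have h1 : f0 x1 + ∑ i, (x1 i - x0 i) ^ 2 ≤ f0 x0 := by
      have hc : Continuous fun x : Fin n → ℝ => f0 x + ∑ i, (x i - x0 i) ^ 2 := by fun_prop
      refine le_of_tendsto ((hc.tendsto x1).comp hx1) (Eventually.of_forall fun k => ?_)
      have h1 := hXle k
      rw [hSP] at h1
      have h2 : 0 ≤ (k : ℝ) * P (X k) := mul_nonneg (Nat.cast_nonneg k) (hP0 _)
      simp only [Function.comp]
      linarith
    have h2 := hmin x1 (hrW hx1K) hfeas.1 hfeas.2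
    funext i
    have := (Finset.sum_eq_zero_iff_of_nonneg (fun i _ => sq_nonneg (x1 i - x0 i))).1
      (le_antisymm (by linarith) (by positivity)) i (Finset.mem_univ i)
    have := pow_eq_zero_iff two_ne_zero |>.1 this
    linarith
  subst hx10
  -- first-order condition for the penalised problem
  have hder : ∀ k x, HasFDerivAt (S k) (fderiv ℝ f0 x
      + ∑ i, (2 * (x i - x1 i)) • (ContinuousLinearMap.proj i : (Fin n → ℝ) →L[ℝ] ℝ)
      + ∑ i, ((k : ℝ) * (2 * g0 i x)) • fderiv ℝ (g0 i) x
      + ∑ j, ((k : ℝ) * (2 * max (h0 j x) 0)) • fderiv ℝ (h0 j) x) x := by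
    intro k x
    have d1 : HasFDerivAt f0 (fderiv ℝ f0 x) x :=
      (hf.differentiable one_ne_zero x).hasFDerivAt
    have d2 : ∀ i : Fin n, HasFDerivAt (fun x : Fin n → ℝ => (x i - x1 i) ^ 2)
        ((2 * (x i - x1 i)) • (ContinuousLinearMap.proj i : (Fin n → ℝ) →L[ℝ] ℝ)) x := by
      intro i
      have := ((hasFDerivAt_apply (𝕜 := ℝ) i x).sub_const (x1 i)).pow 2
      simpa using this
    have d3 : ∀ i, HasFDerivAt (fun x => (k : ℝ) * (g0 i x) ^ 2)
        (((k : ℝ) * (2 * g0 i x)) • fderiv ℝ (g0 i) x) x := by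
      intro i
      have := (((hg i).differentiable one_ne_zero x).hasFDerivAt.pow 2).const_mul (k : ℝ)
      simpa [smul_smul] using this
    have d4 : ∀ j, HasFDerivAt (fun x => (k : ℝ) * (max (h0 j x) 0) ^ 2)
        (((k : ℝ) * (2 * max (h0 j x) 0)) • fderiv ℝ (h0 j) x) x := by
      intro j
      have := ((hasDerivAt_sq_max (h0 j x)).comp_hasFDerivAt x
        ((hh j).differentiable one_ne_zero x).hasFDerivAt).const_mul (k : ℝ)
      simpa [smul_smul, Function.comp_def] using this
    exact ((d1.add (HasFDerivAt.fun_sum fun i _ => d2 i)).add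
      (HasFDerivAt.fun_sum fun i _ => d3 i)).add (HasFDerivAt.fun_sum fun i _ => d4 i)
  have hcrit : ∀ᶠ k in (u : Filter ℕ), fderiv ℝ f0 (X k)
      + ∑ i, (2 * (X k i - x1 i)) • (ContinuousLinearMap.proj i : (Fin n → ℝ) →L[ℝ] ℝ)
      + ∑ i, ((k : ℝ) * (2 * g0 i (X k))) • fderiv ℝ (g0 i) (X k)
      + ∑ j, ((k : ℝ) * (2 * max (h0 j (X k)) 0)) • fderiv ℝ (h0 j) (X k) = 0 := by
    filter_upwards [hx1 (Metric.ball_mem_nhds x1 hr)] with k hk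
    have hloc : IsLocalMin (S k) (X k) := (hX k).isLocalMin
      (mem_of_superset (Metric.isOpen_ball.mem_nhds hk) Metric.ball_subset_closedBall)
    exact (hder k (X k)).fderiv ▸ hloc.fderiv_eq_zero
  -- dividing by the norm of the penalty multipliers keeps them in a compact set
  let v : ℕ → ℝ × (Fin me → ℝ) × (Fin mi → ℝ) := fun k =>
    (1, fun i => (k : ℝ) * (2 * g0 i (X k)), fun j => (k : ℝ) * (2 * max (h0 j (X k)) 0))
  have hv1 : ∀ k, 1 ≤ ‖v k‖ := fun k => by
    simpa only [v, norm_one] using norm_fst_le (v k)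
  obtain ⟨c, hc, hcl⟩ := exists_ultra_lim u
    (isCompact_sphere (0 : ℝ × (Fin me → ℝ) × (Fin mi → ℝ)) 1)
    (x := fun k => ‖v k‖⁻¹ • v k) (Eventually.of_forall fun k => by
      rw [mem_sphere_zero_iff_norm, norm_smul, norm_inv, norm_norm,
        inv_mul_cancel₀ (by linarith [hv1 k])])
  obtain ⟨m, -, hm⟩ := exists_ultra_lim u (isCompact_Icc (a := (0 : ℝ)) (b := 1))
    (x := fun k => ‖v k‖⁻¹) (Eventually.of_forall fun k =>
      ⟨by positivity, inv_le_one_of_one_le₀ (hv1 k)⟩)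
  have hc1 : Tendsto (fun k => ‖v k‖⁻¹ * 1) u (𝓝 c.1) := (continuous_fst.tendsto c).comp hcl
  have hc2 : ∀ i, Tendsto (fun k => ‖v k‖⁻¹ * (v k).2.1 i) u (𝓝 (c.2.1 i)) := fun i =>
    (((continuous_apply i).comp (continuous_fst.comp continuous_snd)).tendsto c).comp hcl
  have hc3 : ∀ j, Tendsto (fun k => ‖v k‖⁻¹ * (v k).2.2 j) u (𝓝 (c.2.2 j)) := fun i =>
    (((continuous_apply i).comp (continuous_snd.comp continuous_snd)).tendsto c).comp hcl
  refine ⟨c, mem_sphere_zero_iff_norm.1 hc, ?_, ?_, ?_, ?_⟩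
  · exact ge_of_tendsto hc1 (Eventually.of_forall fun k => by positivity)
  · intro j
    exact ge_of_tendsto (hc3 j) (Eventually.of_forall fun k => by simp only [v]; positivity)
  · intro j
    rcases (hh0 j).lt_or_eq with hj | hj
    · have : c.2.2 j = 0 := by
        refine tendsto_nhds_unique (hc3 j) (Tendsto.congr' ?_ tendsto_const_nhds)
        have := ((ch j).tendsto x1).comp hx1 (Iio_mem_nhds hj)
        filter_upwards [this] with k hk
        have hk' : h0 j (X k) ≤ 0 := le_of_lt hk
        simp [v, hk']
      simp [this]
    · simp [hj]
  · have cdf := hf.continuous_fderiv one_ne_zero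
    have cdg := fun i => (hg i).continuous_fderiv one_ne_zero
    have cdh := fun j => (hh j).continuous_fderiv one_ne_zero
    have tq : Tendsto (fun k => ∑ i, (2 * (X k i - x1 i)) •
        (ContinuousLinearMap.proj i : (Fin n → ℝ) →L[ℝ] ℝ)) u (𝓝 0) := by
      have hcq : Continuous fun x : Fin n → ℝ => ∑ i, (2 * (x i - x1 i)) •
        (ContinuousLinearMap.proj i : (Fin n → ℝ) →L[ℝ] ℝ) := by fun_prop
      simpa [Function.comp_def] using (hcq.tendsto x1).comp hx1
    have T := (((hc1.smul ((cdf.tendsto x1).comp hx1)).add (hm.smul tq)).add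
      (tendsto_finsetSum Finset.univ fun i _ =>
        (hc2 i).smul (((cdg i).tendsto x1).comp hx1))).add
      (tendsto_finsetSum Finset.univ fun j _ => (hc3 j).smul (((cdh j).tendsto x1).comp hx1))
    rw [smul_zero, add_zero] at T
    refine tendsto_nhds_unique T (Tendsto.congr' ?_ tendsto_const_nhds)
    filter_upwards [hcrit] with k hk
    have h2 := congrArg (fun D => ‖v k‖⁻¹ • D) hk
    simp only [smul_add, smul_zero, Finset.smul_sum, smul_smul] at h2
    simp only [Function.comp, mul_one, v, Finset.smul_sum, smul_smul] at h2 ⊢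
    exact h2.symm

/-! ### Second-order expansion -/

/-- Second-order expansion in the first variable, from two applications of the mean value
theorem; the factor `θ` stands in for the usual `1 / 2`, and only its bounds matter. -/
theorem exists_taylor_two {E Q : Type*} [NormedAddCommGroup E] [NormedSpace ℝ E]
    [NormedAddCommGroup Q] [NormedSpace ℝ Q] {G : E × Q → ℝ} (hG : ContDiff ℝ 2 G)
    (x δ : E) (q : Q) : ∃ θ ∈ Ioo (0 : ℝ) 1, ∃ σ ∈ Ioo (0 : ℝ) 1,
      G (x + δ, q) - G (x, q) = fderiv ℝ G (x, q) (δ, 0)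
        + θ * fderiv ℝ (fderiv ℝ G) (x + σ • δ, q) (δ, 0) (δ, 0) := by
  have hγ : ∀ s : ℝ, HasDerivAt (fun s : ℝ => (x + s • δ, q)) (δ, (0 : Q)) s := fun s => by
    have h1 : HasDerivAt (fun s : ℝ => x + s • δ) δ s := by
      simpa using ((hasDerivAt_id s).smul_const δ).const_add x
    exact h1.prodMk (hasDerivAt_const s q)
  have h1 : ∀ s : ℝ, HasDerivAt (fun s : ℝ => G (x + s • δ, q))
      (fderiv ℝ G (x + s • δ, q) (δ, 0)) s := fun s =>
    (hG.differentiable two_ne_zero _).hasFDerivAt.comp_hasDerivAt s (hγ s)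
  have hG' : ContDiff ℝ 1 (fderiv ℝ G) := hG.fderiv_right (by norm_num)
  have h2 : ∀ s : ℝ, HasDerivAt (fun s : ℝ => fderiv ℝ G (x + s • δ, q) (δ, 0))
      (fderiv ℝ (fderiv ℝ G) (x + s • δ, q) (δ, 0) (δ, 0)) s := fun s => by
    have := (hG'.differentiable one_ne_zero _).hasFDerivAt.comp_hasDerivAt s (hγ s)
    simpa using this.clm_apply (hasDerivAt_const s ((δ, 0) : E × Q))
  obtain ⟨θ, hθ, e1⟩ := exists_hasDerivAt_eq_slope _ _ zero_lt_one
    (fun s _ => (h1 s).continuousAt.continuousWithinAt) (fun s _ => h1 s)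
  obtain ⟨σ, hσ, e2⟩ := exists_hasDerivAt_eq_slope _ _ hθ.1
    (fun s _ => (h2 s).continuousAt.continuousWithinAt) (fun s _ => h2 s)
  refine ⟨θ, hθ, σ, ⟨hσ.1, hσ.2.trans hθ.2⟩, ?_⟩
  have := hθ.1
  rw [eq_div_iff (by simpa using this.ne')] at e2
  simp at e1 e2
  rw [e1] at e2
  linarith

/-- The difference quotient at a moving base point `w t → w0` still tends to the directional
derivative at `w0`, by strict differentiability. -/
theorem tendsto_moving_slope {V F : Type*} [NormedAddCommGroup V] [NormedSpace ℝ V]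
    [NormedAddCommGroup F] [NormedSpace ℝ F] {K : V → F} (hK : ContDiff ℝ 1 K)
    {u : Filter ℝ} (hu : u ≤ 𝓝[>] 0) {w : ℝ → V} {w0 : V} (hw : Tendsto w u (𝓝 w0)) (v : V) :
    Tendsto (fun t => t⁻¹ • (K (w t + t • v) - K (w t))) u (𝓝 (fderiv ℝ K w0 v)) := by
  have ht : Tendsto (fun t : ℝ => t) u (𝓝 0) := hu.trans nhdsWithin_le_nhds
  have hw' : Tendsto (fun t => w t + t • v) u (𝓝 w0) := by
    simpa using hw.add (ht.smul_const v)
  have h1 := (hK.contDiffAt (x := w0)).hasStrictFDerivAt one_ne_zero |>.isLittleO.comp_tendsto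
    (hw'.prodMk_nhds hw)
  have h2 : (fun t : ℝ => t • v) =O[u] fun t => t :=
    Asymptotics.IsBigO.of_bound ‖v‖ (Eventually.of_forall fun t => by
      rw [norm_smul, mul_comm])
  have h2' : ((fun p : V × V => p.1 - p.2) ∘ fun t => (w t + t • v, w t)) =O[u] fun t => t := by
    simpa [Function.comp_def] using h2
  have h3 := (h1.trans_isBigO h2').tendsto_inv_smul_nhds_zero
  have h4 := h3.add_const (fderiv ℝ K w0 v)
  rw [zero_add] at h4
  refine h4.congr' ?_
  filter_upwards [hu self_mem_nhdsWithin] with t ht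
  have ht0 : t ≠ 0 := ne_of_gt ht
  simp [smul_sub, smul_smul, ht0]

/-- One-sided estimate `G (a + δ, q) - G (a, q) ≥ -o(t)` for an increment `δ t → 0` along which
the first-order term is `o(t)`. The second-order term is of size `‖δ t‖²`: either this is
`o(t)`, or it is eventually positive because the limit direction `e` has positive
curvature. -/
theorem curvature_bound {E Q : Type*} [NormedAddCommGroup E] [NormedSpace ℝ E]
    [NormedAddCommGroup Q] [NormedSpace ℝ Q] {G : E × Q → ℝ} (hG : ContDiff ℝ 2 G)
    {u : Filter ℝ} (hu : ∀ᶠ t in u, 0 < t) {a δ : ℝ → E} {q : ℝ → Q} {x0 e : E} {q0 : Q}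
    (ha : Tendsto a u (𝓝 x0)) (hδ : Tendsto δ u (𝓝 0)) (hq : Tendsto q u (𝓝 q0))
    (hgrad : Tendsto (fun t => t⁻¹ * fderiv ℝ G (a t, q t) (δ t, 0)) u (𝓝 0))
    (he : Tendsto (fun t => ‖δ t‖⁻¹ • δ t) u (𝓝 e))
    (halt : Tendsto (fun t => ‖δ t‖ ^ 2 / t) u (𝓝 0) ∨
      0 < fderiv ℝ (fderiv ℝ G) (x0, q0) (e, 0) (e, 0)) :
    ∀ ε > 0, ∀ᶠ t in u, -ε * t ≤ G (a t + δ t, q t) - G (a t, q t) := by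
  choose θ hθ σ hσ hT using fun t => exists_taylor_two hG (a t) (δ t) (q t)
  set η : ℝ → ℝ := fun t => fderiv ℝ (fderiv ℝ G) (a t + σ t • δ t, q t)
    (‖δ t‖⁻¹ • δ t, 0) (‖δ t‖⁻¹ • δ t, 0) with hη
  have hG' : Continuous (fderiv ℝ (fderiv ℝ G)) :=
    (hG.fderiv_right (m := 1) (by norm_num)).continuous_fderiv one_ne_zero
  have hσδ : Tendsto (fun t => σ t • δ t) u (𝓝 0) := by
    refine squeeze_zero_norm (fun t => ?_) (tendsto_zero_iff_norm_tendsto_zero.1 hδ)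
    rw [norm_smul, Real.norm_eq_abs, abs_of_pos (hσ t).1]
    exact mul_le_of_le_one_left (norm_nonneg _) (hσ t).2.le
  have hηl : Tendsto η u (𝓝 (fderiv ℝ (fderiv ℝ G) (x0, q0) (e, 0) (e, 0))) := by
    have h1 : Tendsto (fun t => (a t + σ t • δ t, q t)) u (𝓝 (x0, q0)) := by
      simpa using (ha.add hσδ).prodMk_nhds hq
    have h2 : Tendsto (fun t => ((‖δ t‖⁻¹ • δ t, 0) : E × Q)) u (𝓝 (e, 0)) :=
      he.prodMk_nhds tendsto_const_nhds
    have h3 : Tendsto (fun t => fderiv ℝ (fderiv ℝ G) (a t + σ t • δ t, q t)) u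
        (𝓝 (fderiv ℝ (fderiv ℝ G) (x0, q0))) := (hG'.tendsto _).comp h1
    have happ : Continuous fun w : (E × Q →L[ℝ] E × Q →L[ℝ] ℝ) × (E × Q) => w.1 w.2 w.2 := by
      fun_prop
    exact (happ.tendsto _).comp (h3.prodMk_nhds h2)
  have hT' : ∀ t, G (a t + δ t, q t) - G (a t, q t) =
      fderiv ℝ G (a t, q t) (δ t, 0) + θ t * (‖δ t‖ ^ 2 * η t) := fun t => by
    rw [hT t]
    congr 2
    rcases eq_or_ne (δ t) 0 with h0 | h0
    · have h1 : ((0, 0) : E × Q) = 0 := rfl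
      simp [h0, h1]
    · have h1 : ((δ t, 0) : E × Q) = ‖δ t‖ • (‖δ t‖⁻¹ • δ t, (0 : Q)) := by
        have : ‖δ t‖ ≠ 0 := norm_ne_zero_iff.2 h0
        simp [smul_smul, this]
      rw [h1]
      simp only [map_smul, _root_.smul_apply, smul_eq_mul, hη]
      ring
  intro ε hε
  have hg : ∀ᶠ t in u, -(ε / 2) * t ≤ fderiv ℝ G (a t, q t) (δ t, 0) := by
    filter_upwards [hu, hgrad (Ioi_mem_nhds (show -(ε / 2) < 0 by linarith))] with t ht h1
    have h2 : -(ε / 2) < t⁻¹ * fderiv ℝ G (a t, q t) (δ t, 0) := h1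
    rw [lt_inv_mul_iff₀ ht] at h2
    linarith
  have hc : ∀ᶠ t in u, -(ε / 2) * t ≤ θ t * (‖δ t‖ ^ 2 * η t) := by
    rcases halt with h | h
    · have h1 : Tendsto (fun t => ‖δ t‖ ^ 2 / t * η t) u (𝓝 0) := by simpa using h.mul hηl
      filter_upwards [hu, h1 (Ioi_mem_nhds (show -(ε / 2) < 0 by linarith))] with t ht h1
      have h2 : -(ε / 2) < ‖δ t‖ ^ 2 / t * η t := h1
      rw [div_mul_eq_mul_div, lt_div_iff₀ ht] at h2
      have h3 := (hθ t).1
      have h4 := (hθ t).2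
      have h5 : 0 < ε / 2 * t := by positivity
      nlinarith
    · filter_upwards [hu, hηl (Ioi_mem_nhds h)] with t ht h1
      have h2 : 0 < η t := h1
      have h3 := (hθ t).1
      have h4 : 0 ≤ θ t * (‖δ t‖ ^ 2 * η t) := by positivity
      have h5 : 0 < ε / 2 * t := by positivity
      linarith
  filter_upwards [hg, hc] with t h1 h2
  rw [hT' t]
  linarith

/-! ### Partial derivatives -/

theorem fderiv_slice_left {E Q : Type*} [NormedAddCommGroup E] [NormedSpace ℝ E]
    [NormedAddCommGroup Q] [NormedSpace ℝ Q] {G : E × Q → ℝ} (hG : Differentiable ℝ G)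
    (x : E) (q : Q) (d : E) :
    fderiv ℝ (fun x' => G (x', q)) x d = fderiv ℝ G (x, q) (d, 0) := by
  have h1 : HasFDerivAt (fun x' => G (x', q))
      ((fderiv ℝ G (x, q)).comp (ContinuousLinearMap.inl ℝ E Q)) x :=
    (hG (x, q)).hasFDerivAt.comp x (hasFDerivAt_prodMk_left x q)
  rw [h1.fderiv]; simp

theorem fderiv_slice_right {E Q : Type*} [NormedAddCommGroup E] [NormedSpace ℝ E]
    [NormedAddCommGroup Q] [NormedSpace ℝ Q] {G : E × Q → ℝ} (hG : Differentiable ℝ G)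
    (x : E) (q : Q) (d : Q) :
    fderiv ℝ (fun q' => G (x, q')) q d = fderiv ℝ G (x, q) (0, d) := by
  have h1 : HasFDerivAt (fun q' => G (x, q'))
      ((fderiv ℝ G (x, q)).comp (ContinuousLinearMap.inr ℝ E Q)) q :=
    (hG (x, q)).hasFDerivAt.comp q (hasFDerivAt_prodMk_right x q)
  rw [h1.fderiv]; simp

theorem continuous_fderiv_slice {E Q : Type*} [NormedAddCommGroup E] [NormedSpace ℝ E]
    [NormedAddCommGroup Q] [NormedSpace ℝ Q] {G : E × Q → ℝ} (hG : ContDiff ℝ 2 G) :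
    Continuous fun w : E × Q => fderiv ℝ (fun x' => G (x', w.2)) w.1 := by
  have h1 : (fun w : E × Q => fderiv ℝ (fun x' => G (x', w.2)) w.1) =
      fun w => (fderiv ℝ G w).comp (ContinuousLinearMap.inl ℝ E Q) := by
    funext w
    ext d
    simpa using fderiv_slice_left (hG.differentiable two_ne_zero) w.1 w.2 d
  rw [h1]
  exact (hG.continuous_fderiv two_ne_zero).clm_comp continuous_const

theorem hessQ_slice {Q : Type*} [NormedAddCommGroup Q] [NormedSpace ℝ Q]
    {G : (Fin n → ℝ) × Q → ℝ} (hG : ContDiff ℝ 2 G) (x d : Fin n → ℝ) (q : Q) :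
    hessQ (fun x' => G (x', q)) x d = fderiv ℝ (fderiv ℝ G) (x, q) (d, 0) (d, 0) := by
  have h0 : (fun x' => fderiv ℝ (fun x'' => G (x'', q)) x' d) =
      fun x' => fderiv ℝ G (x', q) (d, 0) :=
    funext fun x' => fderiv_slice_left (hG.differentiable two_ne_zero) x' q d
  have h2 : DifferentiableAt ℝ (fderiv ℝ G) (x, q) :=
    (hG.fderiv_right (m := 1) (by norm_num)).differentiable one_ne_zero _
  have h1 : HasFDerivAt (fun x' => fderiv ℝ G (x', q))
      ((fderiv ℝ (fderiv ℝ G) (x, q)).comp (ContinuousLinearMap.inl ℝ (Fin n → ℝ) Q)) x :=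
    h2.hasFDerivAt.comp x (hasFDerivAt_prodMk_left x q)
  rw [hessQ, h0, (h1.clm_apply (hasFDerivAt_const ((d, 0) : (Fin n → ℝ) × Q) x)).fderiv]
  simp

/-! ### Multipliers along the solution path -/

section

variable {f g h}

theorem fderiv_Lag (hf : Differentiable ℝ fun x => f x p)
    (hg : ∀ i, Differentiable ℝ fun x => g x p i) (hh : ∀ j, Differentiable ℝ fun x => h x p j)
    (x : Fin n → ℝ) (y : Fin me → ℝ) (z : Fin mi → ℝ) :
    fderiv ℝ (fun x' => Lag f g h p x' y z) x = fderiv ℝ (fun x => f x p) x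
      + ∑ i, y i • fderiv ℝ (fun x => g x p i) x
      + ∑ j, z j • fderiv ℝ (fun x => h x p j) x :=
  (((hf x).hasFDerivAt.add (HasFDerivAt.fun_sum fun i _ =>
    (hg i x).hasFDerivAt.const_mul (y i))).add (HasFDerivAt.fun_sum fun j _ =>
    (hh j x).hasFDerivAt.const_mul (z j))).fderiv

/-- Under MFCQ there is no nonzero Fritz John multiplier whose weight on the objective
vanishes. -/
theorem MFCQ.eq_zero_of_abnormal (hm : MFCQ g h p x) (hz : ∀ j, 0 ≤ z j)
    (hcomp : ∀ j, z j * h x p j = 0)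
    (h0 : ∑ i, y i • fderiv ℝ (fun x => g x p i) x
      + ∑ j, z j • fderiv ℝ (fun x => h x p j) x = 0) : y = 0 ∧ z = 0 := by
  obtain ⟨hli, d, hd1, hd2⟩ := hm
  have hz0 : z = 0 := by
    have h1 := congrArg (fun D => D d) h0
    simp [hd1] at h1
    have h2 : ∀ j, z j * fderiv ℝ (fun x => h x p j) x d ≤ 0 := fun j => by
      rcases mul_eq_zero.1 (hcomp j) with h3 | h3
      · simp [h3]
      · exact mul_nonpos_of_nonneg_of_nonpos (hz j) (hd2 j h3).le
    have h3 := (Finset.sum_eq_zero_iff_of_nonpos fun j _ => h2 j).1 h1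
    funext j
    rcases mul_eq_zero.1 (hcomp j) with h4 | h4
    · exact h4
    · exact (mul_eq_zero.1 (h3 j (Finset.mem_univ j))).resolve_right (hd2 j h4).ne
  refine ⟨?_, hz0⟩
  funext i
  refine Fintype.linearIndependent_iff.1 hli y ?_ i
  funext k
  have h1 := congrArg (fun D => D (Pi.single k 1)) h0
  simpa [hz0, gradx] using h1

/-- Local solutions `X t → x` at parameters `P t → p` carry KKT multipliers that converge, along
an ultrafilter, to a KKT multiplier at `x`. The normalised Fritz John triples converge by
compactness, and MFCQ at the limit point alone makes the limiting objective weight positive,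
so that one may divide by it. -/
theorem exists_convergent_multipliers
    (hf : ContDiff ℝ 2 fun q : (Fin n → ℝ) × (Fin l → ℝ) => f q.1 q.2)
    (hg : ∀ i : Fin me, ContDiff ℝ 2 fun q : (Fin n → ℝ) × (Fin l → ℝ) => g q.1 q.2 i)
    (hh : ∀ j : Fin mi, ContDiff ℝ 2 fun q : (Fin n → ℝ) × (Fin l → ℝ) => h q.1 q.2 j)
    (hm : MFCQ g h p x) (hgx : g x p = 0) (hhx : h x p ≤ 0) (u : Ultrafilter ℝ)
    {P : ℝ → Fin l → ℝ} {X : ℝ → Fin n → ℝ} (hP : Tendsto P u (𝓝 p)) (hX : Tendsto X u (𝓝 x))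
    (hsol : ∀ᶠ t in (u : Filter ℝ), IsLocalSol f g h (P t) (X t)) :
    ∃ Y Z y z, IsKKT f g h p x y z ∧ Tendsto Y u (𝓝 y) ∧ Tendsto Z u (𝓝 z) ∧
      ∀ᶠ t in (u : Filter ℝ), IsKKT f g h (P t) (X t) (Y t) (Z t) := by
  have sf : ∀ q, ContDiff ℝ 2 fun x => f x q := fun q =>
    hf.comp (contDiff_id.prodMk contDiff_const)
  have sg : ∀ q i, ContDiff ℝ 2 fun x => g x q i := fun q i =>
    (hg i).comp (contDiff_id.prodMk contDiff_const)
  have sh : ∀ q j, ContDiff ℝ 2 fun x => h x q j := fun q j =>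
    (hh j).comp (contDiff_id.prodMk contDiff_const)
  have hFJ : ∀ t, ∃ c : ℝ × (Fin me → ℝ) × (Fin mi → ℝ), IsLocalSol f g h (P t) (X t) →
      ‖c‖ = 1 ∧ 0 ≤ c.1 ∧ (∀ j, 0 ≤ c.2.2 j) ∧ (∀ j, c.2.2 j * h (X t) (P t) j = 0) ∧
      c.1 • fderiv ℝ (fun x => f x (P t)) (X t)
        + ∑ i, c.2.1 i • fderiv ℝ (fun x => g x (P t) i) (X t)
        + ∑ j, c.2.2 j • fderiv ℝ (fun x => h x (P t) j) (X t) = 0 := by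
    intro t
    by_cases hs : IsLocalSol f g h (P t) (X t)
    · obtain ⟨h1, h2, W, hW, h3⟩ := id hs
      obtain ⟨c, hc⟩ := fritz_john ((sf (P t)).of_le one_le_two)
        (fun i => (sg (P t) i).of_le one_le_two) (fun j => (sh (P t) j).of_le one_le_two)
        (fun i => congrFun h1 i) (fun j => h2 j) hW
        (fun x' hx' a b => h3 x' hx' (funext a) b)
      exact ⟨c, fun _ => hc⟩
    · exact ⟨0, fun h => (hs h).elim⟩
  choose c hc using hFJ
  obtain ⟨b, hb, hbl⟩ := exists_ultra_lim u
    (isCompact_sphere (0 : ℝ × (Fin me → ℝ) × (Fin mi → ℝ)) 1) (x := c)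
    (hsol.mono fun t ht => mem_sphere_zero_iff_norm.2 (hc t ht).1)
  have hb1 : Tendsto (fun t => (c t).1) u (𝓝 b.1) := (continuous_fst.tendsto b).comp hbl
  have hb2 : ∀ i, Tendsto (fun t => (c t).2.1 i) u (𝓝 (b.2.1 i)) := fun i =>
    (((continuous_apply i).comp (continuous_fst.comp continuous_snd)).tendsto b).comp hbl
  have hb3 : ∀ j, Tendsto (fun t => (c t).2.2 j) u (𝓝 (b.2.2 j)) := fun j =>
    (((continuous_apply j).comp (continuous_snd.comp continuous_snd)).tendsto b).comp hbl
  have hXP : Tendsto (fun t => (X t, P t)) u (𝓝 (x, p)) := hX.prodMk_nhds hP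
  have hb1' : 0 ≤ b.1 := ge_of_tendsto hb1 (hsol.mono fun t ht => (hc t ht).2.1)
  have hb3' : ∀ j, 0 ≤ b.2.2 j := fun j =>
    ge_of_tendsto (hb3 j) (hsol.mono fun t ht => (hc t ht).2.2.1 j)
  have hcomp : ∀ j, b.2.2 j * h x p j = 0 := fun j =>
    tendsto_nhds_unique ((hb3 j).mul (((hh j).continuous.tendsto _).comp hXP))
      (Tendsto.congr' (hsol.mono fun t ht => ((hc t ht).2.2.2.1 j).symm) tendsto_const_nhds)
  have hstat : b.1 • fderiv ℝ (fun x => f x p) x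
        + ∑ i, b.2.1 i • fderiv ℝ (fun x => g x p i) x
        + ∑ j, b.2.2 j • fderiv ℝ (fun x => h x p j) x = 0 := by
    have T := ((hb1.smul (((continuous_fderiv_slice hf).tendsto _).comp hXP)).add
      (tendsto_finsetSum Finset.univ fun i _ =>
        (hb2 i).smul (((continuous_fderiv_slice (hg i)).tendsto _).comp hXP))).add
      (tendsto_finsetSum Finset.univ fun j _ =>
        (hb3 j).smul (((continuous_fderiv_slice (hh j)).tendsto _).comp hXP))
    exact tendsto_nhds_unique T
      (Tendsto.congr' (hsol.mono fun t ht => (hc t ht).2.2.2.2.symm) tendsto_const_nhds)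
  have hbpos : 0 < b.1 := by
    refine hb1'.lt_of_ne fun h0 => ?_
    rw [← h0, zero_smul, zero_add] at hstat
    obtain ⟨e1, e2⟩ := hm.eq_zero_of_abnormal p x _ _ hb3' hcomp hstat
    have : b = 0 := Prod.ext h0.symm (Prod.ext e1 e2)
    rw [mem_sphere_zero_iff_norm, this, norm_zero] at hb
    exact zero_ne_one hb
  -- a Fritz John triple with positive objective weight rescales to a KKT multiplier
  have scale : ∀ (q : Fin l → ℝ) (x' : Fin n → ℝ) (c : ℝ × (Fin me → ℝ) × (Fin mi → ℝ)),
      0 < c.1 → g x' q = 0 → h x' q ≤ 0 → (∀ j, 0 ≤ c.2.2 j) →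
      (∀ j, c.2.2 j * h x' q j = 0) →
      c.1 • fderiv ℝ (fun x => f x q) x'
        + ∑ i, c.2.1 i • fderiv ℝ (fun x => g x q i) x'
        + ∑ j, c.2.2 j • fderiv ℝ (fun x => h x q j) x' = 0 →
      IsKKT f g h q x' (c.1⁻¹ • c.2.1) (c.1⁻¹ • c.2.2) := by
    intro q x' c h1 h2 h3 h4 h5 h6
    refine ⟨?_, h2, h3, fun j => ?_, ?_⟩
    · rw [fderiv_Lag q ((sf q).differentiable two_ne_zero)
        (fun i => (sg q i).differentiable two_ne_zero)
        (fun j => (sh q j).differentiable two_ne_zero)]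
      have h7 := congrArg (fun D => c.1⁻¹ • D) h6
      simpa [smul_smul, Finset.smul_sum, h1.ne'] using h7
    · have := h4 j
      simp only [Pi.zero_apply, Pi.smul_apply, smul_eq_mul]
      positivity
    · refine Finset.sum_eq_zero fun j _ => ?_
      simp [mul_assoc, h5 j]
  refine ⟨fun t => (c t).1⁻¹ • (c t).2.1, fun t => (c t).1⁻¹ • (c t).2.2,
    b.1⁻¹ • b.2.1, b.1⁻¹ • b.2.2, scale p x b hbpos hgx hhx hb3' hcomp hstat,
    (hb1.inv₀ hbpos.ne').smul (tendsto_pi_nhds.2 hb2),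
    (hb1.inv₀ hbpos.ne').smul (tendsto_pi_nhds.2 hb3), ?_⟩
  filter_upwards [hsol, hb1 (Ioi_mem_nhds hbpos)] with t ht hpos
  obtain ⟨-, -, h3, h4, h5⟩ := hc t ht
  exact scale _ _ _ hpos ht.1 ht.2.1 h3 h4 h5

/-! ### The Lagrangian along the solution path -/

/-- The Lagrangian as a function of `x` and of the joint parameter `(p, y, z)`. Treating
the multipliers as parameters makes its derivatives jointly continuous in all data. -/
noncomputable def jointLag (f : (Fin n → ℝ) → (Fin l → ℝ) → ℝ) (g : (Fin n → ℝ) → (Fin l → ℝ) → Fin me → ℝ)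
    (h : (Fin n → ℝ) → (Fin l → ℝ) → Fin mi → ℝ) :
    (Fin n → ℝ) × ((Fin l → ℝ) × (Fin me → ℝ) × (Fin mi → ℝ)) → ℝ :=
  fun w => Lag f g h w.2.1 w.1 w.2.2.1 w.2.2.2

theorem contDiff_jointLag
    (hf : ContDiff ℝ 2 fun q : (Fin n → ℝ) × (Fin l → ℝ) => f q.1 q.2)
    (hg : ∀ i : Fin me, ContDiff ℝ 2 fun q : (Fin n → ℝ) × (Fin l → ℝ) => g q.1 q.2 i)
    (hh : ∀ j : Fin mi, ContDiff ℝ 2 fun q : (Fin n → ℝ) × (Fin l → ℝ) => h q.1 q.2 j) :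
    ContDiff ℝ 2 (jointLag f g h) := by
  have hπ : ContDiff ℝ 2 fun w : (Fin n → ℝ) × ((Fin l → ℝ) × (Fin me → ℝ) × (Fin mi → ℝ)) =>
      (w.1, w.2.1) := contDiff_fst.prodMk (contDiff_fst.comp contDiff_snd)
  refine ((hf.comp hπ).add (ContDiff.sum fun i _ => ?_)).add (ContDiff.sum fun j _ => ?_)
  · have hy : ContDiff ℝ 2
        fun w : (Fin n → ℝ) × ((Fin l → ℝ) × (Fin me → ℝ) × (Fin mi → ℝ)) => w.2.2.1 i := by
      fun_prop
    exact hy.mul ((hg i).comp hπ)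
  · have hz : ContDiff ℝ 2
        fun w : (Fin n → ℝ) × ((Fin l → ℝ) × (Fin me → ℝ) × (Fin mi → ℝ)) => w.2.2.2 j := by
      fun_prop
    exact hz.mul ((hh j).comp hπ)

theorem IsKKT.compl (hk : IsKKT f g h p x y z) (j : Fin mi) : z j * h x p j = 0 :=
  (Finset.sum_eq_zero_iff_of_nonpos fun j _ =>
    mul_nonpos_of_nonneg_of_nonpos (hk.2.2.2.1 j) (hk.2.2.1 j)).1 hk.2.2.2.2 j (Finset.mem_univ j)

theorem IsKKT.Lag_eq (hk : IsKKT f g h p x y z) : Lag f g h p x y z = f x p := by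
  simp [Lag, hk.2.1, hk.2.2.2.2]

theorem Lag_le (hgx : g x p = 0) (hhx : h x p ≤ 0) (hz : 0 ≤ z) :
    Lag f g h p x y z ≤ f x p := by
  have : ∑ j, z j * h x p j ≤ 0 := Finset.sum_nonpos fun j _ =>
    mul_nonpos_of_nonneg_of_nonpos (hz j) (hhx j)
  simp [Lag, hgx, this]

theorem IsKKT.fderiv_apply
    (hf : ContDiff ℝ 2 fun q : (Fin n → ℝ) × (Fin l → ℝ) => f q.1 q.2)
    (hg : ∀ i : Fin me, ContDiff ℝ 2 fun q : (Fin n → ℝ) × (Fin l → ℝ) => g q.1 q.2 i)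
    (hh : ∀ j : Fin mi, ContDiff ℝ 2 fun q : (Fin n → ℝ) × (Fin l → ℝ) => h q.1 q.2 j)
    (hk : IsKKT f g h p x y z) (d : Fin n → ℝ) : fderiv ℝ (fun x => f x p) x d
      + ∑ i, y i * fderiv ℝ (fun x => g x p i) x d
      + ∑ j, z j * fderiv ℝ (fun x => h x p j) x d = 0 := by
  have hs : ContDiff ℝ 2 fun x : Fin n → ℝ => (x, p) := contDiff_id.prodMk contDiff_const
  have h1 := hk.1
  rw [fderiv_Lag p ((hf.comp hs).differentiable two_ne_zero)
    (fun i => ((hg i).comp hs).differentiable two_ne_zero)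
    (fun j => ((hh j).comp hs).differentiable two_ne_zero)] at h1
  simpa using congrArg (fun D => D d) h1

/-- If `X t` approaches `x` so slowly that `t = o(‖X t - x‖)`, then a limit direction `e` of
`X t - x` lies in `D_p(x; z')` for every multiplier `(y', z')`, not only for the limit `(y, z)`
of the multipliers of `X t`. Constraints with `z_j > 0` stay active along `X`, so stationarity
with `(y, z)` gives that `e` annihilates the gradient of the objective; stationarity with
`(y', z')` then forces every constraint with `z'_j > 0` to have zero slope along `e`. -/
theorem mem_Dset_of_slow
    (hf : ContDiff ℝ 2 fun q : (Fin n → ℝ) × (Fin l → ℝ) => f q.1 q.2)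
    (hg : ∀ i : Fin me, ContDiff ℝ 2 fun q : (Fin n → ℝ) × (Fin l → ℝ) => g q.1 q.2 i)
    (hh : ∀ j : Fin mi, ContDiff ℝ 2 fun q : (Fin n → ℝ) × (Fin l → ℝ) => h q.1 q.2 j)
    {u : Ultrafilter ℝ} {X : ℝ → Fin n → ℝ} {Y : ℝ → Fin me → ℝ} {Z : ℝ → Fin mi → ℝ}
    {e : Fin n → ℝ}
    (hp : Tendsto (fun t : ℝ => p + t • hdir) u (𝓝 p)) (hX : Tendsto X u (𝓝 x))
    (hZ : Tendsto Z u (𝓝 z)) (hk : IsKKT f g h p x y z)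
    (hK : ∀ᶠ t in (u : Filter ℝ), IsKKT f g h (p + t • hdir) (X t) (Y t) (Z t))
    (he : Tendsto (fun t => ‖X t - x‖⁻¹ • (X t - x)) u (𝓝 e))
    (hslow : Tendsto (fun t => ‖X t - x‖⁻¹ * t) u (𝓝 0))
    {yz : (Fin me → ℝ) × (Fin mi → ℝ)} (hyz : yz ∈ MultSet f g h p x) :
    e ∈ Dset g h p x yz.2 := by
  have hd : Tendsto (fun t => (X t - x, t • hdir)) u (𝓝 (0 : (Fin n → ℝ) × (Fin l → ℝ))) := by
    have h1 : Tendsto (fun t => X t - x) u (𝓝 0) := tendsto_sub_nhds_zero_iff.2 hX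
    have h2 : Tendsto (fun t : ℝ => t • hdir) u (𝓝 0) := by
      simpa using tendsto_sub_nhds_zero_iff.2 hp
    exact h1.prodMk_nhds h2
  have hcd : Tendsto (fun t => ‖X t - x‖⁻¹ • (X t - x, t • hdir)) u
      (𝓝 ((e, 0) : (Fin n → ℝ) × (Fin l → ℝ))) := by
    have h2 : Tendsto (fun t => ‖X t - x‖⁻¹ • t • hdir) u (𝓝 0) := by
      simpa [smul_smul] using hslow.smul_const hdir
    exact he.prodMk_nhds h2
  -- since `t = o(‖X t - x‖)`, only the `x`-derivative survives in the difference quotients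
  have hlim : ∀ F : (Fin n → ℝ) × (Fin l → ℝ) → ℝ, ContDiff ℝ 2 F →
      Tendsto (fun t => ‖X t - x‖⁻¹ * (F (X t, p + t • hdir) - F (x, p))) u
        (𝓝 (fderiv ℝ (fun x' => F (x', p)) x e)) := by
    intro F hF
    rw [fderiv_slice_left (hF.differentiable two_ne_zero)]
    have h1 := HasFDerivWithinAt.lim
      ((hF.differentiable two_ne_zero (x, p)).hasFDerivAt.hasFDerivWithinAt (s := univ))
      hd (Eventually.of_forall fun _ => mem_univ _) hcd
    simpa using h1
  have hge : ∀ i, fderiv ℝ (fun x' => g x' p i) x e = 0 := fun i => by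
    refine tendsto_nhds_unique (hlim _ (hg i)) (Tendsto.congr' ?_ tendsto_const_nhds)
    filter_upwards [hK] with t ht
    simp [ht.2.1, hk.2.1]
  have hhe : ∀ j, h x p j = 0 → fderiv ℝ (fun x' => h x' p j) x e ≤ 0 := fun j hj => by
    refine le_of_tendsto (hlim _ (hh j)) ?_
    filter_upwards [hK] with t ht
    have h1 : h (X t) (p + t • hdir) j ≤ 0 := ht.2.2.1 j
    simp only [hj, sub_zero]
    exact mul_nonpos_of_nonneg_of_nonpos (by positivity) h1
  have hhe0 : ∀ j, z j * fderiv ℝ (fun x' => h x' p j) x e = 0 := fun j => by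
    rcases (show 0 ≤ z j from hk.2.2.2.1 j).eq_or_lt with hz | hz
    · simp [← hz]
    · have hj : h x p j = 0 := (mul_eq_zero.1 (hk.compl p x y z j)).resolve_left hz.ne'
      refine mul_eq_zero_of_right _
        (tendsto_nhds_unique (hlim _ (hh j)) (Tendsto.congr' ?_ tendsto_const_nhds))
      filter_upwards [hK, (tendsto_pi_nhds.1 hZ j) (Ioi_mem_nhds hz)] with t ht hzt
      have hj' : h (X t) (p + t • hdir) j = 0 :=
        (mul_eq_zero.1 (ht.compl _ _ _ _ j)).resolve_left (ne_of_gt hzt)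
      simp [hj, hj']
  have hfe : fderiv ℝ (fun x' => f x' p) x e = 0 := by
    simpa [hge, hhe0] using hk.fderiv_apply p x y z hf hg hh e
  refine ⟨hge, fun j hj hz => ?_⟩
  have h1 := IsKKT.fderiv_apply p x yz.1 yz.2 hf hg hh hyz e
  simp only [hfe, hge, mul_zero, Finset.sum_const_zero, zero_add] at h1
  have h2 := (Finset.sum_eq_zero_iff_of_nonpos fun j _ => ?_).1 h1 j (Finset.mem_univ j)
  · exact (mul_eq_zero.1 h2).resolve_left hz.ne'
  · rcases mul_eq_zero.1 (IsKKT.compl p x yz.1 yz.2 hyz j) with h3 | h3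
    · simp [h3]
    · exact mul_nonpos_of_nonneg_of_nonpos (hyz.2.2.2.1 j) (hhe j h3)

/-- If `r ^ 2` is not `o(t)` along an ultrafilter, it eventually dominates a multiple of `t`, and
hence `t = o(r)`. -/
theorem tendsto_slow {u : Ultrafilter ℝ} (hu : ∀ᶠ t in (u : Filter ℝ), 0 < t) {r : ℝ → ℝ}
    (hr0 : ∀ t, 0 ≤ r t) (hr : Tendsto r u (𝓝 0)) (hn : ¬ Tendsto (fun t => r t ^ 2 / t) u (𝓝 0)) :
    (∀ᶠ t in (u : Filter ℝ), 0 < r t) ∧ Tendsto (fun t => (r t)⁻¹ * t) u (𝓝 0) := by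
  rw [Metric.tendsto_nhds] at hn
  push Not at hn
  obtain ⟨ε, hε, h1⟩ := hn
  have h2 : ∀ᶠ t in (u : Filter ℝ), ε * t ≤ r t ^ 2 ∧ 0 < t := by
    filter_upwards [h1, hu] with t h3 ht
    rw [Real.dist_0_eq_abs, abs_of_nonneg (by positivity), le_div_iff₀ ht] at h3
    exact ⟨h3, ht⟩
  have h3 : ∀ᶠ t in (u : Filter ℝ), 0 < r t := by
    filter_upwards [h2] with t ⟨h4, h5⟩
    refine (hr0 t).lt_of_ne fun h6 => ?_
    rw [← h6] at h4
    nlinarith [mul_pos hε h5]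
  refine ⟨h3, ?_⟩
  have h4 : Tendsto (fun t => r t / ε) u (𝓝 0) := by simpa using hr.div_const ε
  refine squeeze_zero' ?_ ?_ h4
  · filter_upwards [h2, h3] with t h5 h6
    have := h5.2
    positivity
  · filter_upwards [h2, h3] with t h5 h6
    rw [inv_mul_le_iff₀ h6, ← mul_div_assoc, le_div_iff₀ hε]
    nlinarith [h5.1]

end

/-- **Fiacco.** Under GSSOSC and MFCQ at a KKT stationary solution
`x*` of NLP(p), the local value function `φ_ℓ(q) = f(x(q), q)` along the locally
unique continuous local solution map has a finite one-sided directional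
derivative in every direction `h`, equal to
`max_{(y,z) ∈ M_p(x*)} ∇_p L(x*,y,z,p)ᵀ h`. -/
theorem fiacco_local_value_directional_derivative
    (hf : ContDiff ℝ 2 fun q : (Fin n → ℝ) × (Fin l → ℝ) => f q.1 q.2)
    (hg : ∀ i : Fin me, ContDiff ℝ 2 fun q : (Fin n → ℝ) × (Fin l → ℝ) => g q.1 q.2 i)
    (hh : ∀ j : Fin mi, ContDiff ℝ 2 fun q : (Fin n → ℝ) × (Fin l → ℝ) => h q.1 q.2 j)
    (xs : Fin n → ℝ)
    (hstat : (MultSet f g h p xs).Nonempty)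
    (hgssosc : GSSOSC f g h p xs)
    (hmfcq : MFCQ g h p xs)
    -- xmap is the locally unique continuous local solution map with xmap p = xs
    (U : Set (Fin l → ℝ)) (hU : U ∈ 𝓝 p)
    (xmap : (Fin l → ℝ) → (Fin n → ℝ))
    (hxc : ContinuousOn xmap U)
    (hx0 : xmap p = xs)
    (hsol : ∀ q ∈ U, IsLocalSol f g h q (xmap q))
    (huniq : ∃ V ∈ 𝓝 xs, ∀ q ∈ U, ∀ x' ∈ V, IsLocalSol f g h q x' → x' = xmap q) :
    ∀ hdir : Fin l → ℝ,
      Tendsto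
        (fun t : ℝ => (f (xmap (p + t • hdir)) (p + t • hdir) - f (xmap p) p) / t)
        (𝓝[>] (0 : ℝ))
        (𝓝 (sSup ((fun yz : (Fin me → ℝ) × (Fin mi → ℝ) =>
          fderiv ℝ (fun p' => Lag f g h p' xs yz.1 yz.2) p hdir) ''
          MultSet f g h p xs))) := by
  intro hdir
  have hP0 : Tendsto (fun t : ℝ => p + t • hdir) (𝓝[>] 0) (𝓝 p) := by
    have h1 : Continuous fun t : ℝ => p + t • hdir := by fun_prop
    simpa using (h1.tendsto 0).mono_left nhdsWithin_le_nhds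
  rw [tendsto_iff_ultrafilter]
  intro u hu
  have hP := hP0.mono_left hu
  have hpos : ∀ᶠ t in (u : Filter ℝ), 0 < t := hu self_mem_nhdsWithin
  set X : ℝ → Fin n → ℝ := fun t => xmap (p + t • hdir) with hXdef
  have hX : Tendsto X u (𝓝 xs) := by
    have := (hxc.continuousAt hU).tendsto.comp hP
    rwa [hx0] at this
  obtain ⟨yz0, hyz0⟩ := hstat
  have hgx : g xs p = 0 := hyz0.2.1
  have hhx : h xs p ≤ 0 := hyz0.2.2.1
  obtain ⟨Y, Z, y, z, hk, hY, hZ, hK⟩ := exists_convergent_multipliers p xs hf hg hh hmfcq hgx hhx u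
    hP hX ((hP.eventually hU).mono fun t ht => hsol _ ht)
  have hδ : Tendsto (fun t => X t - xs) u (𝓝 0) := tendsto_sub_nhds_zero_iff.2 hX
  obtain ⟨e, -, he⟩ := exists_ultra_lim u (isCompact_closedBall (0 : Fin n → ℝ) 1)
    (x := fun t => ‖X t - xs‖⁻¹ • (X t - xs)) (Eventually.of_forall fun t => by
      rw [mem_closedBall_zero_iff, norm_smul, norm_inv, norm_norm]
      exact inv_mul_le_one)
  have hG := contDiff_jointLag hf hg hh
  have hGd := hG.differentiable two_ne_zero
  -- slow approach (`r² / t` not tending to `0`) forces a direction of positive curvature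
  have halt : Tendsto (fun t => ‖X t - xs‖ ^ 2 / t) u (𝓝 0) ∨
      ∀ yz ∈ MultSet f g h p xs, 0 <
        fderiv ℝ (fderiv ℝ (jointLag f g h)) (xs, (p, yz.1, yz.2)) (e, 0) (e, 0) := by
    refine or_iff_not_imp_left.2 fun hn yz hyz => ?_
    obtain ⟨hrpos, hslow⟩ := tendsto_slow hpos (fun t => norm_nonneg (X t - xs))
      (by simpa using hδ.norm) hn
    have he1 : ‖e‖ = 1 := by
      refine tendsto_nhds_unique he.norm (Tendsto.congr' ?_ tendsto_const_nhds)
      filter_upwards [hrpos] with t ht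
      rw [norm_smul, norm_inv, norm_norm, inv_mul_cancel₀ ht.ne']
    have he0 : e ≠ 0 := fun h0 => by simp [h0] at he1
    have hD := mem_Dset_of_slow p xs y z hdir hf hg hh hP hX hZ hk hK he hslow hyz
    have := hgssosc yz hyz e hD he0
    rwa [← hessQ_slice hG]
  have hGp : ∀ y' z', fderiv ℝ (fun p' => Lag f g h p' xs y' z') p hdir =
      fderiv ℝ (jointLag f g h) (xs, (p, y', z')) (0, (hdir, 0, 0)) := fun y' z' => by
    have h1 := fderiv_slice_right hGd xs (p, y', z') (hdir, 0, 0)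
    rw [← h1]
    have h2 : Differentiable ℝ fun q => jointLag f g h (xs, q) :=
      hGd.comp ((differentiable_const xs).prodMk differentiable_id)
    exact (fderiv_slice_left h2 p (y', z') hdir)
  have hslope : ∀ (Y' : ℝ → Fin me → ℝ) (Z' : ℝ → Fin mi → ℝ) y' z', Tendsto Y' u (𝓝 y') →
      Tendsto Z' u (𝓝 z') → Tendsto (fun t => t⁻¹ * (Lag f g h (p + t • hdir) xs (Y' t) (Z' t)
        - Lag f g h p xs (Y' t) (Z' t))) u
        (𝓝 (fderiv ℝ (fun p' => Lag f g h p' xs y' z') p hdir)) := by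
    intro Y' Z' y' z' hY' hZ'
    rw [hGp]
    have hw : Tendsto (fun t => (xs, (p, Y' t, Z' t))) u (𝓝 (xs, (p, y', z'))) :=
      tendsto_const_nhds.prodMk_nhds (tendsto_const_nhds.prodMk_nhds (hY'.prodMk_nhds hZ'))
    have h1 := tendsto_moving_slope (hG.of_le one_le_two) hu hw (0, (hdir, 0, 0))
    simpa [jointLag] using h1
  set val : (Fin me → ℝ) × (Fin mi → ℝ) → ℝ := fun yz =>
    fderiv ℝ (fun p' => Lag f g h p' xs yz.1 yz.2) p hdir with hval
  set Δ : ℝ → ℝ := fun t => (f (X t) (p + t • hdir) - f (xmap p) p) / t with hΔ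
  -- expanding around `X t`, where the Lagrangian with multipliers `Y t`, `Z t` is stationary
  have hupper : ∀ ε > 0, ∀ᶠ t in (u : Filter ℝ), Δ t < val (y, z) + ε := by
    intro ε hε
    have hδ' : Tendsto (fun t => xs - X t) u (𝓝 0) := by simpa using hδ.neg
    have he' : Tendsto (fun t => ‖xs - X t‖⁻¹ • (xs - X t)) u (𝓝 (-e)) := by
      refine he.neg.congr fun t => ?_
      rw [norm_sub_rev, ← smul_neg, neg_sub]
    have hgrad : Tendsto (fun t => t⁻¹ * fderiv ℝ (jointLag f g h)
        (X t, (p + t • hdir, Y t, Z t)) (xs - X t, 0)) u (𝓝 0) := by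
      refine Tendsto.congr' ?_ tendsto_const_nhds
      filter_upwards [hK] with t ht
      rw [← fderiv_slice_left hGd]
      have : fderiv ℝ (fun x' => jointLag f g h (x', (p + t • hdir, Y t, Z t))) (X t) = 0 := ht.1
      simp [this]
    have hneg : ((-e, 0) : (Fin n → ℝ) × ((Fin l → ℝ) × (Fin me → ℝ) × (Fin mi → ℝ))) =
        -(e, 0) := by simp
    have hc := curvature_bound hG hpos hX hδ' (hP.prodMk_nhds (hY.prodMk_nhds hZ)) hgrad he'
      (halt.imp (fun h1 => h1.congr fun t => by rw [norm_sub_rev])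
        (fun h1 => by
        simpa only [hneg, map_neg, _root_.neg_apply, neg_neg] using h1 (y, z) hk)) (ε / 2) (by positivity)
    filter_upwards [hc, hpos, hK, hslope Y Z y z hY hZ
      (Iio_mem_nhds (show val (y, z) < val (y, z) + ε / 2 by linarith))] with t h1 ht hKt h2
    have h3 := hKt.Lag_eq
    have h4 : Lag f g h p xs (Y t) (Z t) ≤ f xs p := Lag_le p xs _ _ hgx hhx hKt.2.2.2.1
    have h5 : t⁻¹ * (Lag f g h (p + t • hdir) xs (Y t) (Z t) - Lag f g h p xs (Y t) (Z t))
      < val (y, z) + ε / 2 := h2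
    rw [inv_mul_lt_iff₀ ht] at h5
    simp only [jointLag, add_sub_cancel] at h1
    simp only [hΔ, hx0]
    rw [div_lt_iff₀ ht]
    linarith
  -- expanding around `xs` with a fixed multiplier; the `x`-gradient there is `O(t)`
  have hlower : ∀ yz ∈ MultSet f g h p xs, ∀ ε > 0, ∀ᶠ t in (u : Filter ℝ),
      val yz - ε < Δ t := by
    intro yz hyz ε hε
    have hgrad : Tendsto (fun t => t⁻¹ * fderiv ℝ (jointLag f g h)
        (xs, (p + t • hdir, yz.1, yz.2)) (X t - xs, 0)) u (𝓝 0) := by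
      have h1 := tendsto_moving_slope (hG.fderiv_right (m := 1) (by norm_num)) hu
        (tendsto_const_nhds (x := (xs, (p, yz.1, yz.2)))) (0, (hdir, 0, 0))
      have h2 : Tendsto (fun t => ((X t - xs, 0) :
          (Fin n → ℝ) × ((Fin l → ℝ) × (Fin me → ℝ) × (Fin mi → ℝ)))) u (𝓝 0) :=
        hδ.prodMk_nhds tendsto_const_nhds
      have happ : Continuous fun w : ((Fin n → ℝ) × ((Fin l → ℝ) × (Fin me → ℝ) × (Fin mi → ℝ))
          →L[ℝ] ℝ) × ((Fin n → ℝ) × ((Fin l → ℝ) × (Fin me → ℝ) × (Fin mi → ℝ))) =>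
          w.1 w.2 := by fun_prop
      have h3 := (happ.tendsto _).comp (h1.prodMk_nhds h2)
      rw [map_zero] at h3
      refine h3.congr fun t => ?_
      have h4 : fderiv ℝ (jointLag f g h) (xs, (p, yz.1, yz.2)) (X t - xs, 0) = 0 := by
        rw [← fderiv_slice_left hGd]
        have : fderiv ℝ (fun x' => jointLag f g h (x', (p, yz.1, yz.2))) xs = 0 := hyz.1
        simp [this]
      have h5 : (xs, (p, yz.1, yz.2)) + t • ((0, (hdir, 0, 0)) :
          (Fin n → ℝ) × ((Fin l → ℝ) × (Fin me → ℝ) × (Fin mi → ℝ))) =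
          (xs, (p + t • hdir, yz.1, yz.2)) := by
        ext <;> simp
      simp only [Function.comp, h5, _root_.smul_apply, _root_.sub_apply, h4, sub_zero,
        smul_eq_mul]
    have hc := curvature_bound hG hpos (tendsto_const_nhds (x := xs)) hδ
      (hP.prodMk_nhds (tendsto_const_nhds (x := (yz.1, yz.2)))) hgrad he
      (halt.imp id (fun h1 => h1 yz hyz)) (ε / 2) (by positivity)
    filter_upwards [hc, hpos, hK, hslope (fun _ => yz.1) (fun _ => yz.2) yz.1 yz.2
      tendsto_const_nhds tendsto_const_nhds
      (Ioi_mem_nhds (show val yz - ε / 2 < val yz by linarith))] with t h1 ht hKt h2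
    have h3 : Lag f g h p xs yz.1 yz.2 = f xs p := IsKKT.Lag_eq p xs yz.1 yz.2 hyz
    have h4 : Lag f g h (p + t • hdir) (X t) yz.1 yz.2 ≤ f (X t) (p + t • hdir) :=
      Lag_le _ _ _ _ hKt.2.1 hKt.2.2.1 hyz.2.2.2.1
    have h5 : val yz - ε / 2 < t⁻¹ * (Lag f g h (p + t • hdir) xs yz.1 yz.2
      - Lag f g h p xs yz.1 yz.2) := h2
    rw [lt_inv_mul_iff₀ ht] at h5
    simp only [jointLag, add_sub_cancel] at h1
    simp only [hΔ, hx0]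
    rw [lt_div_iff₀ ht]
    linarith
  have hmax : IsGreatest (val '' MultSet f g h p xs) (val (y, z)) := by
    refine ⟨⟨(y, z), hk, rfl⟩, ?_⟩
    rintro _ ⟨yz, hyz, rfl⟩
    refine le_of_forall_pos_lt_add fun ε hε => ?_
    obtain ⟨t, h1, h2⟩ := ((hupper (ε / 2) (by positivity)).and
      (hlower yz hyz (ε / 2) (by positivity))).exists
    linarith
  rw [hmax.csSup_eq, Metric.tendsto_nhds]
  intro ε hε
  filter_upwards [hupper ε hε, hlower (y, z) hk ε hε] with t h1 h2
  rw [Real.dist_eq, abs_lt]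
  constructor <;> linarith
end SensNLP
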